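/- For n ≥ 4, the number of universal cycles for P_{n,3} equals (n-3)^{(n-1)(n-2)/2} · (n-2)^{n-1} · (n-1)^{(n-1)(n-2)/2 − 2} · n^{n-2} · ((n-3)!)^{n(n-1)}. -/

import Mathlib

/-- `c` is a universal cycle for `k`-permutations of `[n]`, viewed as a cyclic
sequence of period `N`: every injective `k`-tuple appears exactly once as `k`
consecutive elements. -/
def IsUniversalCycle (n k N : ℕ) (c : ZMod N → Fin n) : Prop :=
  ∀ w : Fin k → Fin n, Function.Injective w →
    ∃! i : ZMod N, ∀ j : Fin k, c (i + (j : ℕ)) = w j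

/-- Two cyclic sequences are the same universal cycle iff one is a rotation of
the other. -/
def RotEquiv {n k N : ℕ} (c c' : {c : ZMod N → Fin n // IsUniversalCycle n k N c}) : Prop :=
  ∃ t : ZMod N, ∀ i, c'.1 i = c.1 (i + t)

/-!
Sliding a window of length three along a universal cycle reads off an Eulerian cycle of the digraph
whose vertices are the ordered pairs and whose arcs are the triples `abc : ab → bc`. This digraph
is balanced, so the BEST theorem counts its Eulerian tours from a given vertex: the order in which
a tour leaves the vertices determines it, and an ordering of the arcs at each vertex comes from a
tour exactly when the last arcs form an arborescence.

By the matrix-tree theorem the arborescences are counted by the determinant of `L + J`, where `L` is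
the Laplacian and `J` the all-ones matrix. The arcs leaving `ab` miss only `ba` among the pairs
starting with `b`, hence `L + J = (n - 2) • 1 + S + B * (J - 1) * Aᵀ`, where `S` exchanges `ab` and
`ba`, and `A` and `B` send a pair to its first and second letter. Since `S` is an involution without
fixed points, the first two terms have determinant `((n - 2) ^ 2 - 1) ^ (n * (n - 1) / 2)`, and the
determinant lemma reduces what remains to a combination of `1` and `J` of size `n`.
-/

open Finset (univ)
open scoped Finset Matrix Nat

section ListCounting

variable {E : Type*}

theorem card_list_eq_val (F : Finset E) :
    Nat.card {s : List E // (s : Multiset E) = F.val} = (#F)! := by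
  classical
  have hmem (s : List E) : (s : Multiset E) = F.val ↔ s ∈ F.toList.permutations.toFinset := by
    rw [List.mem_toFinset, List.mem_permutations, ← Multiset.coe_eq_coe, Finset.coe_toList]
  rw [Nat.card_congr (Equiv.subtypeEquivRight hmem), Nat.card_eq_fintype_card, Fintype.card_coe,
    List.toFinset_card_of_nodup (List.nodup_permutations _ F.nodup_toList),
    List.length_permutations, Finset.length_toList]

theorem card_list_eq_val_getLast {F : Finset E} {e : E} (he : e ∈ F) :
    Nat.card {s : List E // (s : Multiset E) = F.val ∧ s.getLast? = some e} = (#F - 1)! := by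
  classical
  have happend (s : List E) : ((s ++ [e] : List E) : Multiset E) = F.val ↔
      (s : Multiset E) = (F.erase e).val := by
    rw [← Finset.insert_erase he, Finset.insert_val_of_notMem (Finset.notMem_erase _ _),
      Finset.insert_erase he, ← Multiset.coe_add, add_comm, Multiset.coe_singleton,
      Multiset.singleton_add, Multiset.cons_inj_right]
  rw [← Finset.card_erase_of_mem he, ← card_list_eq_val]
  refine (Nat.card_congr (Equiv.ofBijective
    (fun s => ⟨s.1 ++ [e], (happend s.1).2 s.2, by simp⟩) ⟨fun s s' h => ?_, ?_⟩)).symm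
  · exact Subtype.ext (List.append_left_injective [e] (congrArg Subtype.val h))
  · rintro ⟨s, hs, hlast⟩
    obtain ⟨t, rfl⟩ := List.getLast?_eq_some_iff.1 hlast
    exact ⟨⟨t, (happend t).1 hs⟩, rfl⟩

end ListCounting

section NodupCounting

variable {E : Type*} [Fintype E] {l : List E}

theorem countP_le_card_filter (hl : l.Nodup) (p : E → Prop) [DecidablePred p] :
    l.countP p ≤ #{e | p e} := by
  classical
  rw [List.countP_eq_length_filter, ← List.toFinset_card_of_nodup (hl.filter _)]
  exact Finset.card_le_card fun e => by simp

theorem countP_eq_card_filter_iff (hl : l.Nodup) {p : E → Prop} [DecidablePred p] :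
    l.countP p = #{e | p e} ↔ ∀ e, p e → e ∈ l := by
  classical
  have hsub : (l.filter p).toFinset ⊆ ({e | p e} : Finset E) := fun e => by simp
  rw [← (countP_le_card_filter hl p).ge_iff_eq, List.countP_eq_length_filter,
    ← List.toFinset_card_of_nodup (hl.filter _), Finset.eq_iff_card_le_of_subset hsub]
  simp only [Finset.ext_iff, List.mem_toFinset, List.mem_filter, decide_eq_true_eq,
    Finset.mem_filter_univ, and_iff_right_iff_imp]

end NodupCounting

section Digraph

variable {V E : Type*} (src tgt : E → V)

/-- `IsWalk src tgt x l y` says that the list of arcs `l` is a walk from `x` to `y` in the digraph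
with arc set `E` and source and target maps `src` and `tgt`. -/
def IsWalk : V → List E → V → Prop
  | x, [], y => x = y
  | x, e :: l, y => src e = x ∧ IsWalk (tgt e) l y

/-- Every vertex has as many outgoing as incoming arcs. -/
def IsBalanced [DecidableEq V] [Fintype E] : Prop :=
  ∀ v, #{e | src e = v} = #{e | tgt e = v}

/-- `l` is an Eulerian tour starting and ending at `w`. -/
def IsEulerTour (w : V) (l : List E) : Prop :=
  l.Nodup ∧ (∀ e, e ∈ l) ∧ IsWalk src tgt w l w

/-- `σ` lists, for every vertex, the arcs leaving it in some order, each exactly once. -/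
def IsArcOrdering [DecidableEq V] [Fintype E] (σ : V → List E) : Prop :=
  ∀ v, (σ v : Multiset E) = ({e | src e = v} : Finset E).val

/-- The relation joining `a` to the target of the last arc in `σ a`: when `σ` records in which order
a walk leaves its vertices, this is the arc by which the walk leaves `a` for the last time. -/
def LastExit (σ : V → List E) (a b : V) : Prop := ∃ e ∈ (σ a).getLast?, tgt e = b

/-- At every vertex `v`, the walk `l` has used an initial segment of the list `σ v`, in order. -/
def FollowsOrdering [DecidableEq V] (σ : V → List E) (l : List E) : Prop :=
  ∀ v, l.filter (src · = v) <+: σ v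

/-- `f` chooses an arc out of every vertex such that following these arcs always leads to `w`. Its
arcs out of the vertices other than `w` form a spanning tree oriented towards `w`, whereas the arc
`f w` is arbitrary. -/
def IsArborescence (w : V) (f : V → E) : Prop :=
  (∀ v, src (f v) = v) ∧ ∀ v, Relation.ReflTransGen (fun a b => tgt (f a) = b) v w

variable {src tgt} {l l' : List E} {x y y' w : V}

theorem lastExit_iff {σ : V → List E} {f : V → E} (h : ∀ v, (σ v).getLast? = some (f v)) {a b : V} :
    LastExit tgt σ a b ↔ tgt (f a) = b := by
  simp [LastExit, h]

theorem IsWalk.concat {e : E} (h : IsWalk src tgt x l y) (he : src e = y) :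
    IsWalk src tgt x (l ++ [e]) (tgt e) := by
  induction l generalizing x with
  | nil => exact ⟨he.trans (Eq.symm h), rfl⟩
  | cons a l ih => exact ⟨h.1, ih h.2⟩

variable [DecidableEq V]

theorem IsWalk.countP_tgt_add (h : IsWalk src tgt x l y) (u : V) :
    l.countP (tgt · = u) + (if x = u then 1 else 0) =
      l.countP (src · = u) + (if y = u then 1 else 0) := by
  induction l generalizing x with
  | nil => cases h; rfl
  | cons e l ih =>
    obtain ⟨rfl, h⟩ := h
    have := ih h
    simp only [List.countP_cons, decide_eq_true_eq]
    omega

theorem IsWalk.eq_of_filter_src_eq (h : IsWalk src tgt x l y) (h' : IsWalk src tgt x l' y')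
    (heq : ∀ v, l.filter (src · = v) = l'.filter (src · = v)) : l = l' := by
  induction l generalizing x l' with
  | nil =>
    cases l' with
    | nil => rfl
    | cons e l' => simpa using heq (src e)
  | cons e l ih =>
    cases l' with
    | nil => simpa using heq (src e)
    | cons e' l' =>
      obtain ⟨rfl, h⟩ := h
      obtain ⟨hsrc, h'⟩ := h'
      obtain rfl : e = e' := by simpa [hsrc] using congrArg List.head? (heq (src e))
      refine congrArg _ (ih h h' fun v => ?_)
      have := heq v
      by_cases hv : src e = v <;> simpa [hv] using this

theorem LastExit.filter_cons {e : E} {a b : V}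
    (h : LastExit tgt (fun v => l.filter (src · = v)) a b) :
    LastExit tgt (fun v => (e :: l).filter (src · = v)) a b := by
  obtain ⟨f, hf, rfl⟩ := h
  refine ⟨f, ?_, rfl⟩
  rw [Option.mem_def] at hf
  by_cases he : src e = a <;> simp [he, List.getLast?_cons, hf]

theorem IsWalk.reflTransGen_lastExit (h : IsWalk src tgt x l y) {v : V}
    (hv : v = x ∨ ∃ e ∈ l, src e = v) :
    Relation.ReflTransGen (LastExit tgt fun v => l.filter (src · = v)) v y := by
  induction l generalizing x v with
  | nil =>
    obtain rfl : v = x := by simpa using hv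
    exact Eq.subst h .refl
  | cons e l ih =>
    obtain ⟨rfl, h⟩ := h
    have lift {u : V} (hu : u = tgt e ∨ ∃ f ∈ l, src f = u) :=
      Relation.ReflTransGen.mono (fun _ _ => LastExit.filter_cons (e := e)) _ _ (ih h hu)
    by_cases hl : ∃ f ∈ l, src f = v
    · exact lift (.inr hl)
    · obtain rfl : v = src e := by
        simpa only [List.exists_mem_cons_iff, hl, or_false, eq_comm (a := v), or_self] using hv
      have hlast : l.filter (src · = src e) = [] := by simpa using hl
      exact .head ⟨e, by simp [hlast], rfl⟩ (lift (.inl rfl))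

section Balanced

variable [Fintype E]

theorem IsBalanced.eq_of_walk (hbal : IsBalanced src tgt) (h : IsWalk src tgt x l y)
    (hl : l.Nodup) (hy : ∀ e, src e = y → e ∈ l) : x = y := by
  have hcount := h.countP_tgt_add y
  rw [(countP_eq_card_filter_iff hl).2 hy, hbal, if_pos rfl] at hcount
  have := countP_le_card_filter hl (tgt · = y)
  by_contra hne
  rw [if_neg hne] at hcount
  omega

theorem IsBalanced.mem_of_closed_walk (hbal : IsBalanced src tgt) (h : IsWalk src tgt x l x)
    (hl : l.Nodup) {v : V} (hv : ∀ e, src e = v → e ∈ l) {e : E} (he : tgt e = v) : e ∈ l := by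
  refine (countP_eq_card_filter_iff (p := (tgt · = v)) hl).1 ?_ e he
  rw [← hbal, ← (countP_eq_card_filter_iff hl).2 hv]
  exact Nat.add_right_cancel (h.countP_tgt_add v)

namespace IsArcOrdering

variable {σ : V → List E} (hσ : IsArcOrdering src σ)
include hσ

theorem nodup (v : V) : (σ v).Nodup :=
  Multiset.coe_nodup.1 (hσ v ▸ Finset.nodup _)

theorem mem_iff {v : V} {e : E} : e ∈ σ v ↔ src e = v := by
  rw [← Multiset.mem_coe, hσ v, Finset.mem_val, Finset.mem_filter_univ]

theorem nodup_of_follows (hl : FollowsOrdering src σ l) : l.Nodup := by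
  classical
  refine List.nodup_iff_count_le_one.2 fun e => ?_
  rw [← List.count_filter (p := (src · = src e)) (by simp)]
  exact List.nodup_iff_count_le_one.1 ((hσ.nodup _).sublist (hl (src e)).sublist) e

theorem mem_of_filter_eq {v : V} (hv : l.filter (src · = v) = σ v) (e : E) (he : src e = v) :
    e ∈ l :=
  List.mem_of_mem_filter (hv ▸ hσ.mem_iff.2 he)

theorem filter_eq_of_last_mem (hl : FollowsOrdering src σ l) {v : V} {e : E}
    (he : e ∈ (σ v).getLast?) (hel : e ∈ l) : l.filter (src · = v) = σ v := by
  obtain ⟨r, hr⟩ := hl v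
  rcases r.eq_nil_or_concat with rfl | ⟨r, f, rfl⟩
  · simpa using hr
  · have hef : e = f := by simpa [← hr, eq_comm] using he
    have hdisj : List.Disjoint _ _ := List.disjoint_of_nodup_append (hr ▸ hσ.nodup v)
    refine absurd (hdisj (a := e) ?_ (by simp [hef])) not_false
    simpa [hel] using hσ.mem_iff.1 (List.mem_of_getLast? he)

theorem exists_exhausting_walk (w : V) :
    ∃ l y, IsWalk src tgt w l y ∧ FollowsOrdering src σ l ∧ l.filter (src · = y) = σ y := by
  by_contra! hstuck
  have hlong (k : ℕ) : ∃ l y, IsWalk src tgt w l y ∧ FollowsOrdering src σ l ∧ l.length = k := by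
    induction k with
    | zero => exact ⟨[], w, rfl, fun v => List.nil_prefix, rfl⟩
    | succ k ih =>
      obtain ⟨l, y, hwalk, hfol, rfl⟩ := ih
      obtain ⟨_ | ⟨e, r⟩, hr⟩ := hfol y
      · exact absurd (by simpa using hr) (hstuck l y hwalk hfol)
      · obtain rfl : src e = y := hσ.mem_iff.1 (hr ▸ by simp)
        refine ⟨l ++ [e], tgt e, hwalk.concat rfl, fun v => ?_, by simp⟩
        rw [List.filter_append]
        by_cases hv : src e = v
        · subst hv
          exact ⟨r, by simpa using hr⟩
        · simpa [hv] using hfol v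
  obtain ⟨l, y, -, hfol, hlen⟩ := hlong (Fintype.card E + 1)
  have := (hσ.nodup_of_follows hfol).length_le_card
  omega

theorem exists_isEulerTour (hbal : IsBalanced src tgt)
    (hw : ∀ v, Relation.ReflTransGen (LastExit tgt σ) v w) :
    ∃ l, IsEulerTour src tgt w l ∧ ∀ v, l.filter (src · = v) = σ v := by
  obtain ⟨l, y, hwalk, hfol, hy⟩ := hσ.exists_exhausting_walk (tgt := tgt) w
  have hnd := hσ.nodup_of_follows hfol
  obtain rfl : w = y := hbal.eq_of_walk hwalk hnd (hσ.mem_of_filter_eq hy)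
  have hall (v : V) : l.filter (src · = v) = σ v := by
    induction hw v using Relation.ReflTransGen.head_induction_on with
    | refl => exact hy
    | head hab _ ih =>
      obtain ⟨e, he, rfl⟩ := hab
      exact hσ.filter_eq_of_last_mem hfol he
        (hbal.mem_of_closed_walk hwalk hnd (hσ.mem_of_filter_eq ih) rfl)
  exact ⟨l, ⟨hnd, fun e => hσ.mem_of_filter_eq (hall _) e rfl, hwalk⟩, hall⟩

end IsArcOrdering

theorem IsEulerTour.isArcOrdering_filter (h : IsEulerTour src tgt w l) :
    IsArcOrdering src fun v => l.filter (src · = v) :=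
  fun _ => (Multiset.Nodup.ext (Multiset.coe_nodup.2 (h.1.filter _)) (Finset.nodup _)).2 fun e => by
    simp [h.2.1 e]

theorem card_isEulerTour_eq_card_isArcOrdering (hbal : IsBalanced src tgt)
    (hsrc : Function.Surjective src) (w : V) :
    Nat.card {l // IsEulerTour src tgt w l} =
      Nat.card {σ // IsArcOrdering src σ ∧ ∀ v, Relation.ReflTransGen (LastExit tgt σ) v w} := by
  refine Nat.card_congr (Equiv.ofBijective (fun l => ⟨fun v => l.1.filter (src · = v),
    l.2.isArcOrdering_filter, fun v => ?_⟩) ⟨?_, ?_⟩)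
  · obtain ⟨e, he⟩ := hsrc v
    exact l.2.2.2.reflTransGen_lastExit (.inr ⟨e, l.2.2.1 e, he⟩)
  · rintro ⟨l, hl⟩ ⟨l', hl'⟩ h
    exact Subtype.ext (hl.2.2.eq_of_filter_src_eq hl'.2.2 (congrFun (congrArg Subtype.val h)))
  · rintro ⟨σ, hσ, hw⟩
    obtain ⟨l, hl, h⟩ := hσ.exists_isEulerTour hbal hw
    exact ⟨⟨l, hl⟩, Subtype.ext (funext h)⟩

end Balanced

section BEST

variable [Fintype V] [Fintype E]

theorem card_isArcOrdering_getLast {f : V → E} (hf : ∀ v, src (f v) = v) :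
    Nat.card {σ // IsArcOrdering src σ ∧ ∀ v, (σ v).getLast? = some (f v)} =
      ∏ v, (#{e | src e = v} - 1)! := by
  let P (v : V) (s : List E) : Prop :=
    (s : Multiset E) = ({e | src e = v} : Finset E).val ∧ s.getLast? = some (f v)
  calc
    _ = Nat.card {σ : V → List E // ∀ v, P v (σ v)} :=
      Nat.card_congr (Equiv.subtypeEquivRight fun _ => forall_and.symm)
    _ = ∏ v, Nat.card {s // P v s} := by rw [Nat.card_congr Equiv.subtypePiEquivPi, Nat.card_pi]
    _ = ∏ v, (#{e | src e = v} - 1)! :=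
      Finset.prod_congr rfl fun v _ => card_list_eq_val_getLast (by simpa using hf v)

theorem card_isArcOrdering (hsrc : Function.Surjective src) (w : V) :
    Nat.card {σ // IsArcOrdering src σ ∧ ∀ v, Relation.ReflTransGen (LastExit tgt σ) v w} =
      Nat.card {f // IsArborescence src tgt w f} * ∏ v, (#{e | src e = v} - 1)! := by
  have hex (σ : {σ // IsArcOrdering src σ ∧ ∀ v, Relation.ReflTransGen (LastExit tgt σ) v w})
      (v : V) : ∃ e, (σ.1 v).getLast? = some e := by
    obtain ⟨e, he⟩ := hsrc v
    exact ⟨_, List.getLast?_eq_some_getLast (List.ne_nil_of_mem (σ.2.1.mem_iff.2 he))⟩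
  choose last hlast using hex
  let split : {σ // IsArcOrdering src σ ∧ ∀ v, Relation.ReflTransGen (LastExit tgt σ) v w} ≃
      Σ f : {f // IsArborescence src tgt w f},
        {σ // IsArcOrdering src σ ∧ ∀ v, (σ v).getLast? = some (f.1 v)} :=
    { toFun σ := ⟨⟨last σ, fun v => σ.2.1.mem_iff.1 (List.mem_of_getLast? (hlast σ v)), fun v =>
        Relation.ReflTransGen.mono (fun _ _ => (lastExit_iff (hlast σ)).1) _ _ (σ.2.2 v)⟩,
        ⟨σ.1, σ.2.1, hlast σ⟩⟩
      invFun p := ⟨p.2.1, p.2.2.1, fun v =>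
        Relation.ReflTransGen.mono (fun _ _ => (lastExit_iff p.2.2.2).2) _ _ (p.1.2.2 v)⟩
      left_inv _ := rfl
      right_inv p := Sigma.subtype_ext (Subtype.ext <| funext fun v => Option.some_injective _ <|
        (hlast _ v).symm.trans (p.2.2.2 v)) rfl }
  have hcard (f : {f // IsArborescence src tgt w f}) := card_isArcOrdering_getLast f.2.1
  have hfin (f : {f // IsArborescence src tgt w f}) :
      Finite {σ // IsArcOrdering src σ ∧ ∀ v, (σ v).getLast? = some (f.1 v)} :=
    Nat.finite_of_card_ne_zero <| hcard f ▸ Finset.prod_ne_zero_iff.2 fun _ _ =>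
      Nat.factorial_ne_zero _
  classical
  have := Fintype.ofFinite {f // IsArborescence src tgt w f}
  rw [Nat.card_congr split, Nat.card_sigma, Finset.sum_congr rfl fun f _ => hcard f,
    Finset.sum_const, Finset.card_univ, Nat.card_eq_fintype_card, smul_eq_mul]

theorem card_isEulerTour (hbal : IsBalanced src tgt)
    (hsrc : Function.Surjective src) (w : V) :
    Nat.card {l // IsEulerTour src tgt w l} =
      Nat.card {f // IsArborescence src tgt w f} * ∏ v, (#{e | src e = v} - 1)! := by
  rw [card_isEulerTour_eq_card_isArcOrdering hbal hsrc, card_isArcOrdering hsrc]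

end BEST

end Digraph

theorem exists_rank_of_reflTransGen {V : Type*} {f : V → V} {w : V}
    (h : ∀ v, Relation.ReflTransGen (f · = ·) v w) : ∃ d : V → ℕ, ∀ v ≠ w, d (f v) < d v := by
  classical
  have hex (v : V) : ∃ k, f^[k] v = w := by
    induction h v using Relation.ReflTransGen.head_induction_on with
    | refl => exact ⟨0, rfl⟩
    | head hab _ ih =>
      obtain ⟨k, hk⟩ := ih
      exact ⟨k + 1, by rw [Function.iterate_succ_apply, hab, hk]⟩
  refine ⟨fun v => Nat.find (hex v), fun v hv => ?_⟩
  beta_reduce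
  have hspec := Nat.find_spec (hex v)
  obtain ⟨k, hk⟩ : ∃ k, Nat.find (hex v) = k + 1 :=
    Nat.exists_eq_succ_of_ne_zero fun h0 => hv (by rwa [h0] at hspec)
  rw [hk] at hspec ⊢
  exact Nat.lt_succ_of_le (Nat.find_min' _ hspec)

section MatrixTree

variable {V E : Type*} [DecidableEq V] [Fintype E] (R : Type*) [CommRing R] (src tgt : E → V)

/-- The Laplacian of the digraph with source and target maps `src` and `tgt`: out-degrees on the
diagonal, minus the adjacency matrix counting the arcs from one vertex to another. -/
def laplacian : Matrix V V R :=
  .of fun v => ∑ e with src e = v, (Pi.single v 1 - Pi.single (tgt e) 1)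

theorem laplacian_apply (v u : V) : laplacian R src tgt v u =
    (if v = u then (#{e | src e = v} : R) else 0) - #{e | src e = v ∧ tgt e = u} := by
  rw [laplacian, Matrix.of_apply, Finset.sum_apply, ← Finset.filter_filter]
  simp only [Pi.sub_apply, Pi.single_apply, Finset.sum_sub_distrib, Finset.sum_const, nsmul_eq_mul,
    mul_ite, mul_one, mul_zero, Finset.sum_boole, eq_comm (b := u)]

variable [Fintype V]

variable {R} in
theorem det_eq_one_of_rank {α : Type*} [LinearOrder α] {M : Matrix V V R} {d : V → α}
    (hdiag : ∀ i, M i i = 1) (hzero : ∀ i j, i ≠ j → d i ≤ d j → M i j = 0) : M.det = 1 := by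
  have htri : M.BlockTriangular (OrderDual.toDual ∘ d) := fun i j hij =>
    hzero i j (fun h => (h ▸ hij).false) (OrderDual.toDual_lt_toDual.1 hij).le
  rw [htri.det]
  refine Finset.prod_eq_one fun a _ => ?_
  suffices M.toSquareBlock (OrderDual.toDual ∘ d) a = 1 by rw [this, Matrix.det_one]
  ext ⟨i, hi⟩ ⟨j, hj⟩
  rw [Matrix.toSquareBlock_def, Matrix.of_apply, Matrix.one_apply]
  split_ifs with hij
  · cases hij
    exact hdiag i
  · exact hzero i j (fun h => hij (Subtype.ext h))
      (OrderDual.toDual.injective (hi.trans hj.symm)).le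

/-- The Laplacian of the digraph with one arc from every `v` to `f v`, with its row at `w` replaced
by a unit vector. -/
def rootedFunctionalLaplacian (w : V) (f : V → V) : Matrix V V R :=
  .of fun v => if v = w then Pi.single w 1 else Pi.single v 1 - Pi.single (f v) 1

theorem det_rootedFunctionalLaplacian_eq_one {w : V} {f : V → V}
    (h : ∀ v, Relation.ReflTransGen (f · = ·) v w) :
    (rootedFunctionalLaplacian R w f).det = 1 := by
  obtain ⟨d, hd⟩ := exists_rank_of_reflTransGen h
  have hne {i j : V} (hi : i ≠ w) (hij : d i ≤ d j) : j ≠ f i := by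
    rintro rfl
    exact (hd i hi).not_ge hij
  refine det_eq_one_of_rank (d := d) (fun i => ?_) fun i j hij hdij => ?_ <;>
    obtain rfl | hi := eq_or_ne i w
  · simp [rootedFunctionalLaplacian]
  · simp [rootedFunctionalLaplacian, hi, hne hi le_rfl]
  · simp [rootedFunctionalLaplacian, hij.symm]
  · simp [rootedFunctionalLaplacian, hi, hij.symm, hne hi hdij]

theorem det_rootedFunctionalLaplacian_eq_zero {w v₀ : V} {f : V → V}
    (h : ¬Relation.ReflTransGen (f · = ·) v₀ w) :
    (rootedFunctionalLaplacian R w f).det = 0 := by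
  classical
  have hker : rootedFunctionalLaplacian R w f *ᵥ
      (fun v => if Relation.ReflTransGen (f · = ·) v w then 0 else 1) = 0 := by
    ext v
    obtain rfl | hv := eq_or_ne v w
    · simp [rootedFunctionalLaplacian, Matrix.mulVec, Relation.ReflTransGen.refl]
    · have hrow : rootedFunctionalLaplacian R w f v = Pi.single v 1 - Pi.single (f v) 1 := if_neg hv
      have hstep : Relation.ReflTransGen (f · = ·) v w ↔
          Relation.ReflTransGen (f · = ·) (f v) w := by
        rw [Relation.ReflTransGen.cases_head_iff]
        simp [hv]
      change rootedFunctionalLaplacian R w f v ⬝ᵥ _ = 0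
      simp [hrow, sub_dotProduct, hstep]
  exact Matrix.det_eq_zero_of_mulVec_eq_zero_of_mem_nonZeroDivisors hker (i := v₀) (by simp [h])

open Classical in
theorem det_rootedFunctionalLaplacian (w : V) (f : V → V) :
    (rootedFunctionalLaplacian R w f).det =
      if ∀ v, Relation.ReflTransGen (f · = ·) v w then 1 else 0 := by
  split_ifs with h
  · exact det_rootedFunctionalLaplacian_eq_one R h
  · exact det_rootedFunctionalLaplacian_eq_zero R (not_forall.1 h).choose_spec

theorem laplacian_mulVec_one : laplacian R src tgt *ᵥ 1 = 0 := by
  ext v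
  change (∑ e with src e = v, (Pi.single v 1 - Pi.single (tgt e) 1) : V → R) ⬝ᵥ 1 = 0
  simp only [sum_dotProduct, sub_dotProduct, single_one_dotProduct, Pi.one_apply, sub_self,
    Finset.sum_const_zero]

theorem card_isArborescence_eq_mul_det (w : V) :
    (Nat.card {f // IsArborescence src tgt w f} : R) =
      #{e | src e = w} * ((laplacian R src tgt).updateRow w (Pi.single w 1)).det := by
  classical
  have hrow : (laplacian R src tgt).updateRow w ((#{e | src e = w} : R) • Pi.single w 1) =
      .of fun v => ∑ e with src e = v,
        if v = w then Pi.single w 1 else Pi.single v 1 - Pi.single (tgt e) 1 := by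
    ext v
    obtain rfl | hv := eq_or_ne v w
    · simp [Nat.cast_smul_eq_nsmul]
    · simp [laplacian, hv]
  have hexpand := (Matrix.detRowAlternating (n := V) (R := R)).toMultilinearMap.map_sum_finset
    (fun v e => if v = w then Pi.single w 1 else Pi.single v 1 - Pi.single (tgt e) 1)
    (fun v => {e | src e = v})
  calc
    (Nat.card {f // IsArborescence src tgt w f} : R)
      = ∑ f ∈ Fintype.piFinset fun v => {e | src e = v},
          (rootedFunctionalLaplacian R w (tgt ∘ f)).det := by
        simp only [det_rootedFunctionalLaplacian, Finset.sum_boole, Nat.card_eq_fintype_card,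
          Fintype.card_subtype]
        congr 2
        ext f
        rw [Finset.mem_filter_univ, Finset.mem_filter, Fintype.mem_piFinset]
        simp only [Finset.mem_filter_univ, IsArborescence, Function.comp_apply]
    _ = _ := by
      rw [← Matrix.det_updateRow_smul, hrow]
      exact hexpand.symm

variable {R src tgt}

theorem IsBalanced.one_vecMul_laplacian (hbal : IsBalanced src tgt) :
    1 ᵥ* laplacian R src tgt = 0 := by
  ext u
  have hin : #{e | tgt e = u} = ∑ v, #{e | src e = v ∧ tgt e = u} := by
    rw [Finset.card_eq_sum_card_fiberwise fun e _ => Finset.mem_univ (src e)]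
    simp only [Finset.filter_filter, and_comm]
  simp [Matrix.vecMul, dotProduct, laplacian_apply, hbal u, hin]

theorem det_updateRow_single {L : Matrix V V R} (hL : L *ᵥ 1 = 0) (w : V) :
    (L.updateRow w (Pi.single w 1)).det =
      (L + Matrix.vecMulVec (Pi.single w 1) (Pi.single w 1)).det := by
  have hupd : L + Matrix.vecMulVec (Pi.single w 1) (Pi.single w 1) =
      L.updateRow w (L w + Pi.single w 1) := by
    ext i j
    obtain rfl | hi := eq_or_ne i w
    · simp [Matrix.vecMulVec_apply]
    · simp [Matrix.vecMulVec_apply, hi]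
  have hdet : L.det = 0 :=
    Matrix.det_eq_zero_of_mulVec_eq_zero_of_mem_nonZeroDivisors hL (i := w) (one_mem _)
  rw [hupd, Matrix.det_updateRow_add, Matrix.updateRow_eq_self, hdet, zero_add]

theorem add_vecMulVec_one_eq_mul {L : Matrix V V R} (hrow : L *ᵥ 1 = 0) (hcol : 1 ᵥ* L = 0)
    {x : V → R} (hx : x ⬝ᵥ 1 = 1) :
    L + Matrix.vecMulVec 1 1 = (1 + Matrix.vecMulVec (1 - x) 1) * (L + Matrix.vecMulVec x x) *
      (1 + Matrix.vecMulVec 1 (1 - x)) := by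
  have hleft : (1 + Matrix.vecMulVec (1 - x) 1) * (L + Matrix.vecMulVec x x) =
      L + Matrix.vecMulVec 1 x := by
    rw [add_mul, one_mul, mul_add, Matrix.vecMulVec_mul, hcol, Matrix.vecMulVec_zero, zero_add,
      Matrix.vecMulVec_mul_vecMulVec, dotProduct_comm, hx, one_smul, add_assoc,
      ← Matrix.add_vecMulVec, add_sub_cancel]
  rw [hleft, mul_add, mul_one, add_mul, Matrix.mul_vecMulVec, hrow, Matrix.zero_vecMulVec, zero_add,
    Matrix.vecMulVec_mul_vecMulVec, hx, one_smul, add_assoc, ← Matrix.vecMulVec_add, add_sub_cancel]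

theorem det_one_add_vecMulVec (u v : V → R) : (1 + Matrix.vecMulVec u v).det = 1 + v ⬝ᵥ u := by
  rw [Matrix.vecMulVec_eq Unit, Matrix.det_one_add_replicateCol_mul_replicateRow]

theorem card_sq_mul_det_updateRow {L : Matrix V V R} (hrow : L *ᵥ 1 = 0) (hcol : 1 ᵥ* L = 0)
    (w : V) : (Fintype.card V : R) ^ 2 * (L.updateRow w (Pi.single w 1)).det =
      (L + Matrix.vecMulVec 1 1).det := by
  rw [det_updateRow_single hrow, add_vecMulVec_one_eq_mul hrow hcol (x := Pi.single w 1) (by simp),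
    Matrix.det_mul, Matrix.det_mul, det_one_add_vecMulVec, det_one_add_vecMulVec,
    dotProduct_sub, sub_dotProduct]
  simp
  ring

theorem IsBalanced.card_sq_mul_card_isArborescence (hbal : IsBalanced src tgt) (w : V) :
    (Fintype.card V : R) ^ 2 * Nat.card {f // IsArborescence src tgt w f} =
      #{e | src e = w} * (laplacian R src tgt + Matrix.vecMulVec 1 1).det := by
  rw [card_isArborescence_eq_mul_det, mul_left_comm,
    card_sq_mul_det_updateRow (laplacian_mulVec_one R src tgt) hbal.one_vecMul_laplacian]

end MatrixTree

section Involution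

theorem exists_apply_iff_not_of_involutive {V : Type*} {σ : V → V} (hσ : Function.Involutive σ)
    (hfix : ∀ v, σ v ≠ v) : ∃ p : V → Prop, ∀ v, p (σ v) ↔ ¬p v := by
  refine ⟨fun v => WellOrderingRel v (σ v), fun v => ?_⟩
  beta_reduce
  rw [hσ v]
  refine ⟨fun h => asymm h, fun h => ?_⟩
  exact ((trichotomous_of WellOrderingRel v (σ v)).resolve_left h).resolve_left (hfix v).symm

variable {V R : Type*} [Fintype V] [DecidableEq V] [CommRing R]

theorem det_smul_one_add_permMatrix {σ : Equiv.Perm V} (hσ : Function.Involutive σ)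
    (hfix : ∀ v, σ v ≠ v) (x : R) :
    (x • 1 + σ.permMatrix R).det = (x ^ 2 - 1) ^ (Fintype.card V / 2) := by
  classical
  obtain ⟨p, hp⟩ := exists_apply_iff_not_of_involutive hσ hfix
  let e : Fin 2 × {v // p v} ≃ V :=
    ((finTwoEquiv.prodCongr (.refl _)).trans (Equiv.boolProdEquivSum _)).trans
      ((Equiv.sumCongr (.refl _) (σ.subtypeEquiv fun v => by simp [hp])).trans (Equiv.sumCompl p))
  have he0 (v) : e (0, v) = v := rfl
  have he1 (v) : e (1, v) = σ v := rfl
  have hcard : Fintype.card V = 2 * Fintype.card {v // p v} := by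
    rw [← Fintype.card_congr e, Fintype.card_prod, Fintype.card_fin]
  have hblock : (x • 1 + σ.permMatrix R).submatrix e e =
      Matrix.blockDiagonal fun _ => !![x, 1; 1, x] := by
    have hne (v u : {v // p v}) : σ v ≠ u := fun h => (hp v).1 (h ▸ u.2) v.2
    ext ⟨i, v⟩ ⟨j, u⟩
    fin_cases i <;> fin_cases j <;>
      simp [he0, he1, Matrix.blockDiagonal_apply, Matrix.one_apply, hne, (hne _ _).symm, hσ _,
        Subtype.coe_inj]
  rw [← Matrix.det_submatrix_equiv_self e, hblock, Matrix.det_blockDiagonal, Finset.prod_const,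
    Matrix.det_fin_two_of, hcard, Nat.mul_div_cancel_left _ two_pos, Finset.card_univ, sq, one_mul]

theorem smul_one_add_permMatrix_mul_smul_one_sub_permMatrix {σ : Equiv.Perm V}
    (hσ : Function.Involutive σ) (x : R) :
    (x • 1 + σ.permMatrix R) * (x • 1 - σ.permMatrix R) = (x ^ 2 - 1) • 1 := by
  have hsq : σ.permMatrix R * σ.permMatrix R = 1 := by
    rw [← Matrix.permMatrix_mul, Equiv.ext (f := σ * σ) (g := 1) hσ, Matrix.permMatrix_one]
  rw [add_mul, mul_sub, mul_sub, hsq, sub_smul, one_smul]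
  simp [smul_smul, sq]

theorem inv_smul_one_add_permMatrix {K : Type*} [Field K] {σ : Equiv.Perm V}
    (hσ : Function.Involutive σ) {x : K} (hx : x ^ 2 - 1 ≠ 0) :
    (x • 1 + σ.permMatrix K)⁻¹ = (x ^ 2 - 1)⁻¹ • (x • 1 - σ.permMatrix K) :=
  Matrix.inv_eq_right_inv <| by
    rw [Matrix.mul_smul, smul_one_add_permMatrix_mul_smul_one_sub_permMatrix hσ, inv_smul_smul₀ hx]

theorem det_smul_one_add_smul_vecMulVec_one [Nonempty V] (a b : R) :
    (a • 1 + b • Matrix.vecMulVec 1 1 : Matrix V V R).det =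
      a ^ (Fintype.card V - 1) * (a + Fintype.card V * b) := by
  have hchar : (a • 1 + b • Matrix.vecMulVec 1 1 : Matrix V V R).det =
      (Matrix.vecMulVec (-b • 1 : V → R) 1).charpoly.eval a := by
    rw [Matrix.eval_charpoly, Matrix.smul_vecMulVec, neg_smul, sub_neg_eq_add,
      Matrix.scalar_apply, Matrix.smul_one_eq_diagonal]
  have hdot : (-b • 1 : V → R) ⬝ᵥ 1 = -b * Fintype.card V := by
    rw [smul_dotProduct, one_dotProduct_one, smul_eq_mul]
  obtain ⟨d, hd⟩ := Nat.exists_eq_add_of_le' (Fintype.card_pos (α := V))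
  rw [hchar, Matrix.charpoly_vecMulVec, hdot, hd, Nat.add_sub_cancel, Polynomial.eval_sub,
    Polynomial.eval_smul, Polynomial.eval_X_pow, Polynomial.eval_X_pow, smul_eq_mul]
  ring

end Involution

section Transition

open Fin.Embedding (init tail)

variable {α : Type*} {k : ℕ}

theorem insertNth_injective_of_notMem_range (i : Fin (k + 1)) (v : Fin k ↪ α) {a : α}
    (ha : a ∉ Set.range v) : Function.Injective (i.insertNth a v : Fin (k + 1) → α) := by
  intro j₁ j₂ h
  induction j₁ using i.succAboveCases <;> induction j₂ using i.succAboveCases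
  · rfl
  · simp_all [eq_comm]
  · simp_all
  · simp_all

variable [Fintype α] [DecidableEq α]

theorem card_filter_removeNth_eq (i : Fin (k + 1)) (v : Fin k ↪ α) :
    #{e : Fin (k + 1) ↪ α | i.removeNth e = v} = Fintype.card α - k := by
  have hcompl : #(univ.map v)ᶜ = Fintype.card α - k := by
    rw [Finset.card_compl, Finset.card_map, Finset.card_fin]
  rw [← hcompl]
  refine Finset.card_bij (fun e _ => e i) (fun e he => ?_) (fun e he e' he' hi => ?_)
    fun a ha => ?_
  · have hv := (Finset.mem_filter_univ e).1 he
    simp [← hv, Fin.removeNth]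
  · refine DFunLike.coe_injective ?_
    rw [← i.insertNth_self_removeNth e, ← i.insertNth_self_removeNth e', hi,
      (Finset.mem_filter_univ e).1 he, (Finset.mem_filter_univ e').1 he']
  · have ha : a ∉ Set.range v := by simpa using ha
    refine ⟨⟨_, insertNth_injective_of_notMem_range i v ha⟩, ?_,
      i.insertNth_apply_same (α := fun _ => α) a v⟩
    exact (Finset.mem_filter_univ _).2 (i.removeNth_insertNth (α := fun _ => α) a v)

theorem card_filter_init_eq (v : Fin k ↪ α) :
    #{e : Fin (k + 1) ↪ α | init e = v} = Fintype.card α - k := by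
  simp only [← card_filter_removeNth_eq (Fin.last k) v, Fin.removeNth_last, ← DFunLike.coe_fn_eq]
  rfl

theorem card_filter_tail_eq (v : Fin k ↪ α) :
    #{e : Fin (k + 1) ↪ α | tail e = v} = Fintype.card α - k := by
  simp only [← card_filter_removeNth_eq 0 v, Fin.removeNth_zero, ← DFunLike.coe_fn_eq]
  rfl

theorem isBalanced_init_tail : IsBalanced (init (n := k) (α := α)) tail := fun v => by
  rw [card_filter_init_eq, card_filter_tail_eq]

omit [DecidableEq α] in
theorem init_surjective (hk : k < Fintype.card α) :
    Function.Surjective (init : (Fin (k + 1) ↪ α) → (Fin k ↪ α)) := fun v => by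
  classical
  have hpos : 0 < #{e : Fin (k + 1) ↪ α | init e = v} := by
    rw [card_filter_init_eq]
    exact Nat.sub_pos_of_lt hk
  obtain ⟨e, he⟩ := Finset.card_pos.1 hpos
  exact ⟨e, (Finset.mem_filter_univ e).1 he⟩

theorem card_filter_init_eq_tail_eq (v u : Fin 2 ↪ α) :
    #{e : Fin (2 + 1) ↪ α | init e = v ∧ tail e = u} = if v 1 = u 0 ∧ v 0 ≠ u 1 then 1 else 0 := by
  have hinit {e : Fin 3 ↪ α} (he : init e = v) : e 0 = v 0 ∧ e 1 = v 1 := by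
    rw [← he]
    exact ⟨rfl, rfl⟩
  have htail {e : Fin 3 ↪ α} (he : tail e = u) : e 1 = u 0 ∧ e 2 = u 1 := by
    rw [← he]
    exact ⟨rfl, rfl⟩
  split_ifs with h
  · have hu : u 1 ∉ Set.range v := by
      simp [Fin.exists_fin_two, h.1, h.2]
    refine Finset.card_eq_one.2 ⟨Fin.Embedding.snoc v hu, Finset.ext fun e => ?_⟩
    rw [Finset.mem_filter_univ, Finset.mem_singleton]
    constructor
    · rintro ⟨he, he'⟩
      rw [← DFunLike.coe_fn_eq, Fin.Embedding.coe_snoc, ← he, ← (htail he').2]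
      exact (Fin.snoc_init_self e).symm
    · rintro rfl
      refine ⟨Fin.Embedding.init_snoc v hu, DFunLike.ext _ _ (Fin.forall_fin_two.2 ⟨h.1, rfl⟩)⟩
  · rw [Finset.card_eq_zero, Finset.filter_eq_empty_iff]
    rintro e - ⟨he, he'⟩
    refine h ⟨(hinit he).2.symm.trans (htail he').1, ?_⟩
    rw [← (hinit he).1, ← (htail he').2]
    exact e.injective.ne (by decide)

end Transition

section TransitionLaplacian

variable {α : Type*}

/-- The reversal `ab ↦ ba` of ordered pairs of distinct letters. -/
def pairSwap (α : Type*) : Equiv.Perm (Fin 2 ↪ α) :=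
  Equiv.embeddingCongr (Equiv.swap 0 1) (Equiv.refl α)

theorem pair_ext_iff {v u : Fin 2 ↪ α} : v = u ↔ v 0 = u 0 ∧ v 1 = u 1 :=
  DFunLike.ext_iff.trans Fin.forall_fin_two

theorem pairSwap_involutive : Function.Involutive (pairSwap α) := fun _ =>
  pair_ext_iff.2 ⟨rfl, rfl⟩

theorem pairSwap_ne_self (v : Fin 2 ↪ α) : pairSwap α v ≠ v := fun h =>
  v.injective.ne (by decide : (0 : Fin 2) ≠ 1) (pair_ext_iff.1 h).2

variable [Fintype α] [DecidableEq α] (R : Type*) [CommRing R]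

/-- The incidence matrix between ordered pairs of distinct letters and their `i`-th letter. -/
def letterMatrix (α : Type*) [DecidableEq α] (i : Fin 2) : Matrix (Fin 2 ↪ α) α R :=
  (1 : Matrix α α R).submatrix (· i) id

omit [Fintype α] in
theorem letterMatrix_apply (i : Fin 2) (v : Fin 2 ↪ α) (a : α) :
    letterMatrix R α i v a = if v i = a then 1 else 0 :=
  Matrix.one_apply

theorem letterMatrix_mul_mul_transpose_letterMatrix (i j : Fin 2) (M : Matrix α α R) :
    letterMatrix R α i * M * (letterMatrix R α j)ᵀ = M.submatrix (· i) (· j) := by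
  ext v u
  simp [Matrix.mul_apply, letterMatrix_apply]

theorem permMatrix_pairSwap_mul_letterMatrix_one :
    (pairSwap α).permMatrix R * letterMatrix R α 1 = letterMatrix R α 0 :=
  PEquiv.toMatrix_toPEquiv_mul (pairSwap α) (letterMatrix R α 1)

theorem card_filter_pair_eq (a b : α) :
    #{v : Fin 2 ↪ α | v 0 = a ∧ v 1 = b} = if a = b then 0 else 1 := by
  split_ifs with hab
  · rw [Finset.card_eq_zero, Finset.filter_eq_empty_iff]
    rintro v - ⟨h0, h1⟩
    exact v.injective.ne (by decide : (0 : Fin 2) ≠ 1) (h0.trans (hab.trans h1.symm))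
  · refine Finset.card_eq_one.2 ⟨Function.Embedding.embFinTwo hab, Finset.ext fun v => ?_⟩
    rw [Finset.mem_filter_univ, Finset.mem_singleton, pair_ext_iff]
    rfl

theorem card_filter_pair_zero_eq (a : α) :
    #{v : Fin 2 ↪ α | v 0 = a} = Fintype.card α - 1 := by
  rw [← card_filter_removeNth_eq 1 ⟨fun _ : Fin 1 => a, Function.injective_of_subsingleton _⟩]
  simp only [funext_iff, Fin.forall_fin_one, Function.Embedding.coeFn_mk]
  rfl

theorem transpose_letterMatrix_mul_letterMatrix_apply (i j : Fin 2) (a b : α) :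
    ((letterMatrix R α i)ᵀ * letterMatrix R α j) a b = #{v : Fin 2 ↪ α | v i = a ∧ v j = b} := by
  simp [Matrix.mul_apply, letterMatrix_apply, ← ite_and, and_comm]

theorem transpose_letterMatrix_zero_mul_letterMatrix_one :
    (letterMatrix R α 0)ᵀ * letterMatrix R α 1 = Matrix.vecMulVec 1 1 - 1 := by
  ext a b
  rw [transpose_letterMatrix_mul_letterMatrix_apply, card_filter_pair_eq, Matrix.sub_apply,
    Matrix.one_apply]
  split_ifs <;> simp

theorem transpose_letterMatrix_zero_mul_letterMatrix_zero :
    (letterMatrix R α 0)ᵀ * letterMatrix R α 0 = ((Fintype.card α - 1 : ℕ) : R) • 1 := by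
  ext a b
  rw [transpose_letterMatrix_mul_letterMatrix_apply, Matrix.smul_apply, Matrix.one_apply]
  split_ifs with hab
  · simp [← hab, card_filter_pair_zero_eq]
  · rw [Finset.filter_false_of_mem fun v _ h => hab (h.1.symm.trans h.2)]
    simp

theorem transpose_letterMatrix_mul_smul_one_sub_permMatrix_mul_letterMatrix (x : R) :
    (letterMatrix R α 0)ᵀ * ((x • 1 - (pairSwap α).permMatrix R) * letterMatrix R α 1) =
      x • (Matrix.vecMulVec 1 1 - 1) - ((Fintype.card α - 1 : ℕ) : R) • 1 := by
  rw [Matrix.sub_mul, permMatrix_pairSwap_mul_letterMatrix_one, Matrix.smul_mul, Matrix.one_mul,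
    Matrix.mul_sub, Matrix.mul_smul, transpose_letterMatrix_zero_mul_letterMatrix_one,
    transpose_letterMatrix_zero_mul_letterMatrix_zero]

theorem laplacian_init_tail_add_vecMulVec_one :
    laplacian R (Fin.Embedding.init (α := α)) Fin.Embedding.tail + Matrix.vecMulVec 1 1 =
      (((Fintype.card α - 2 : ℕ) : R) • 1 + (pairSwap α).permMatrix R) +
        letterMatrix R α 1 *
          ((Matrix.vecMulVec 1 1 - 1 : Matrix α α R) * (letterMatrix R α 0)ᵀ) := by
  rw [← Matrix.mul_assoc, letterMatrix_mul_mul_transpose_letterMatrix]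
  ext v u
  have hswap : pairSwap α v = u ↔ v 1 = u 0 ∧ v 0 = u 1 := pair_ext_iff
  simp only [Matrix.add_apply, Matrix.sub_apply, Matrix.smul_apply, Matrix.submatrix_apply,
    laplacian_apply, card_filter_init_eq, card_filter_init_eq_tail_eq, Matrix.one_apply,
    PEquiv.toMatrix_apply, Equiv.toPEquiv_apply, Option.mem_some_iff, hswap]
  by_cases h10 : v 1 = u 0 <;> by_cases h01 : v 0 = u 1 <;> simp [h10, h01]

end TransitionLaplacian

section TransitionDeterminant

variable {α K : Type*} [Fintype α] [DecidableEq α] [Field K]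

theorem one_add_mul_inv_mul_letterMatrix [Nonempty α]
    (hc : ((Fintype.card α : K) - 2) ^ 2 - 1 ≠ 0) :
    1 + (Matrix.vecMulVec 1 1 - 1 : Matrix α α K) * (letterMatrix K α 0)ᵀ *
        (((Fintype.card α : K) - 2) • 1 + (pairSwap α).permMatrix K)⁻¹ * letterMatrix K α 1 =
      (((Fintype.card α : K) - 2) ^ 2 - 1)⁻¹ •
        (((Fintype.card α : K) * (Fintype.card α - 2)) • 1 +
          ((Fintype.card α : K) ^ 2 - 5 * Fintype.card α + 5) • Matrix.vecMulVec 1 1) := by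
  have hJ : (Matrix.vecMulVec 1 1 * Matrix.vecMulVec 1 1 : Matrix α α K) =
      (Fintype.card α : K) • Matrix.vecMulVec 1 1 := by
    rw [Matrix.vecMulVec_mul_vecMulVec, one_dotProduct_one, Matrix.vecMulVec_smul]
  rw [Matrix.mul_assoc, Matrix.mul_assoc, inv_smul_one_add_permMatrix pairSwap_involutive hc,
    Matrix.smul_mul, Matrix.mul_smul,
    transpose_letterMatrix_mul_smul_one_sub_permMatrix_mul_letterMatrix,
    Nat.cast_pred Fintype.card_pos, Matrix.mul_smul, mul_sub, Matrix.mul_smul,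
    Matrix.mul_smul, mul_sub, sub_mul, hJ, mul_one, one_mul]
  match_scalars <;> field_simp <;> ring

omit [DecidableEq α] in
variable (α) in
theorem card_pairs_div_two : Fintype.card (Fin 2 ↪ α) / 2 =
    (Fintype.card α - 1) * (Fintype.card α - 2) / 2 + (Fintype.card α - 1) := by
  have hchoose : Fintype.card (Fin 2 ↪ α) / 2 = (Fintype.card α).choose 2 := by
    rw [Fintype.card_embedding_eq, Fintype.card_fin, Nat.choose_eq_descFactorial_div_factorial,
      Nat.factorial_two]
  rw [hchoose, ← Nat.sub_sub _ 1 1, ← Nat.choose_two_right]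
  cases Fintype.card α with
  | zero => rfl
  | succ m => rw [Nat.choose_succ_succ' m 1, Nat.choose_one_right, add_comm, Nat.add_sub_cancel]

theorem det_laplacian_init_tail_add_vecMulVec_one (hα : 2 ≤ Fintype.card α)
    (hc : ((Fintype.card α : K) - 2) ^ 2 - 1 ≠ 0) :
    (laplacian K (Fin.Embedding.init (α := α)) (Fin.Embedding.tail (n := 2)) +
      Matrix.vecMulVec 1 1).det =
      (((Fintype.card α : K) - 2) ^ 2 - 1) ^ ((Fintype.card α - 1) * (Fintype.card α - 2) / 2) *
        (Fintype.card α * (Fintype.card α * (Fintype.card α - 2)) ^ (Fintype.card α - 1)) := by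
  have : Nonempty α := Fintype.card_pos_iff.1 (by lia)
  have hsum : (Fintype.card α : K) * (Fintype.card α - 2) +
      Fintype.card α * ((Fintype.card α : K) ^ 2 - 5 * Fintype.card α + 5) =
      Fintype.card α * (((Fintype.card α : K) - 2) ^ 2 - 1) := by
    ring
  have hpow : (((Fintype.card α : K) - 2) ^ 2 - 1)⁻¹ ^ Fintype.card α =
      ((((Fintype.card α : K) - 2) ^ 2 - 1) ^ (Fintype.card α - 1) *
        (((Fintype.card α : K) - 2) ^ 2 - 1))⁻¹ := by
    rw [← pow_succ, Nat.sub_add_cancel Fintype.card_pos, inv_pow]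
  have hdet := det_smul_one_add_permMatrix (pairSwap_involutive (α := α)) pairSwap_ne_self
    ((Fintype.card α : K) - 2)
  have hunit : IsUnit ((((Fintype.card α : K) - 2) • 1 + (pairSwap α).permMatrix K).det) := by
    rw [hdet]
    exact (pow_ne_zero _ hc).isUnit
  rw [laplacian_init_tail_add_vecMulVec_one, Nat.cast_sub hα, Nat.cast_two,
    Matrix.det_add_mul _ _ hunit, one_add_mul_inv_mul_letterMatrix hc, Matrix.det_smul,
    det_smul_one_add_smul_vecMulVec_one, hdet, card_pairs_div_two, hsum, hpow, pow_add]
  field_simp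

end TransitionDeterminant

section TransitionTours

open Fin.Embedding (init tail)

variable {α : Type*} [Fintype α]

theorem card_isArborescence_init_tail (hα : 4 ≤ Fintype.card α) (w : Fin 2 ↪ α) :
    Nat.card {f // IsArborescence init tail w f} = (Fintype.card α - 2) *
      ((Fintype.card α - 3) ^ ((Fintype.card α - 1) * (Fintype.card α - 2) / 2) *
        (Fintype.card α - 2) ^ (Fintype.card α - 1) *
        (Fintype.card α - 1) ^ ((Fintype.card α - 1) * (Fintype.card α - 2) / 2 - 2) *
        Fintype.card α ^ (Fintype.card α - 2)) := by
  classical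
  have hfactor : ((Fintype.card α : ℚ) - 2) ^ 2 - 1 =
      ((Fintype.card α - 3 : ℕ) : ℚ) * (Fintype.card α - 1 : ℕ) := by
    push_cast [(by lia : 3 ≤ Fintype.card α), (by lia : 1 ≤ Fintype.card α)]
    ring
  have htwo : (Fintype.card α : ℚ) - 2 = (Fintype.card α - 2 : ℕ) := by
    push_cast [(by lia : 2 ≤ Fintype.card α)]
    rfl
  have hc : ((Fintype.card α : ℚ) - 2) ^ 2 - 1 ≠ 0 := by
    rw [hfactor]
    exact_mod_cast (Nat.mul_pos (by lia) (by lia)).ne'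
  have key := isBalanced_init_tail.card_sq_mul_card_isArborescence (R := ℚ) w
  rw [det_laplacian_init_tail_add_vecMulVec_one (by lia) hc, card_filter_init_eq, hfactor,
    Fintype.card_embedding_eq, Fintype.card_fin, htwo] at key
  norm_cast at key
  have htwo_le : 2 ≤ (Fintype.card α - 1) * (Fintype.card α - 2) / 2 :=
    (Nat.le_div_iff_mul_le two_pos).2 ((by norm_num : 2 * 2 ≤ 3 * 2).trans (by gcongr <;> lia))
  obtain ⟨q, hq⟩ := Nat.exists_eq_add_of_le' htwo_le
  obtain ⟨m, hm⟩ := Nat.exists_eq_add_of_le' hα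
  simp only [hq, Nat.add_sub_cancel] at key ⊢
  simp only [hm, Nat.descFactorial_succ, Nat.descFactorial_zero, Nat.reduceSubDiff,
    mul_pow] at key ⊢
  refine Nat.eq_of_mul_eq_mul_left (by positivity : 0 < ((m + 4) * (m + 3)) ^ 2) ?_
  linear_combination key

theorem card_isEulerTour_init_tail {k : ℕ} (hk : k < Fintype.card α) (w : Fin k ↪ α) :
    Nat.card {l // IsEulerTour init tail w l} = Nat.card {f // IsArborescence init tail w f} *
      (Fintype.card α - k - 1)! ^ (Fintype.card α).descFactorial k := by
  classical
  simp only [card_isEulerTour isBalanced_init_tail (init_surjective hk), card_filter_init_eq,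
    Finset.prod_const, Finset.card_univ, Fintype.card_embedding_eq, Fintype.card_fin]

end TransitionTours

section EulerCycle

variable {V E : Type*} {src tgt : E → V} {N : ℕ}

theorem isWalk_map_range_succ_iff (f : ℕ → E) (m : ℕ) {x y : V} :
    IsWalk src tgt x ((List.range (m + 1)).map f) y ↔
      src (f 0) = x ∧ (∀ i < m, tgt (f i) = src (f (i + 1))) ∧ tgt (f m) = y := by
  induction m generalizing f x with
  | zero => simp [IsWalk]
  | succ m ih =>
    rw [List.range_succ_eq_map, List.map_cons, List.map_map, IsWalk, ih (f ∘ Nat.succ),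
      Nat.forall_lt_succ_left]
    simp only [Function.comp_apply, Nat.succ_eq_add_one, zero_add, eq_comm (b := tgt (f 0)),
      and_assoc]

variable (src tgt) in
/-- A cyclic enumeration of all arcs, each exactly once, in which consecutive arcs are adjacent. -/
def IsEulerCycle (e : ZMod N → E) : Prop :=
  Function.Bijective e ∧ ∀ i, tgt (e i) = src (e (i + 1))

variable [NeZero N]

theorem forall_zmod_iff_forall_lt {p : ZMod N → Prop} : (∀ i, p i) ↔ ∀ k < N, p (k : ℕ) :=
  ⟨fun h k _ => h k, fun h i => by simpa using h i.val i.val_lt⟩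

theorem isWalk_map_range_natCast_iff (e : ZMod N → E) (w : V) :
    IsWalk src tgt w ((List.range N).map fun k : ℕ => e k) w ↔
      (∀ i, tgt (e i) = src (e (i + 1))) ∧ src (e 0) = w := by
  obtain ⟨m, rfl⟩ := Nat.exists_eq_succ_of_ne_zero (NeZero.ne N)
  have hlast : (m : ZMod (m + 1)) + 1 = 0 := by
    rw [← Nat.cast_succ, ZMod.natCast_self]
  rw [isWalk_map_range_succ_iff, forall_zmod_iff_forall_lt, Nat.forall_lt_succ_right, hlast]
  simp only [Nat.cast_zero, Nat.cast_succ]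
  constructor
  · rintro ⟨hw, hstep, hend⟩
    exact ⟨⟨hstep, hend.trans hw.symm⟩, hw⟩
  · rintro ⟨⟨hstep, hend⟩, hw⟩
    exact ⟨hw, hstep, hend.trans hw⟩

theorem isEulerTour_map_range_natCast_iff (e : ZMod N → E) (w : V) :
    IsEulerTour src tgt w ((List.range N).map fun k : ℕ => e k) ↔
      IsEulerCycle src tgt e ∧ src (e 0) = w := by
  have hinj : ((List.range N).map fun k : ℕ => e k).Nodup ↔ Function.Injective e := by
    rw [List.nodup_map_iff_inj_on List.nodup_range]
    simp only [Function.Injective, forall_zmod_iff_forall_lt, List.mem_range]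
    refine forall₂_congr fun a ha => forall₂_congr fun b hb => ?_
    rw [ZMod.natCast_eq_natCast_iff', Nat.mod_eq_of_lt ha, Nat.mod_eq_of_lt hb]
  have hsurj : (∀ a, a ∈ (List.range N).map fun k : ℕ => e k) ↔ Function.Surjective e := by
    refine forall_congr' fun a => ?_
    rw [List.mem_map, ← not_iff_not]
    simp [forall_zmod_iff_forall_lt]
  rw [IsEulerTour, isWalk_map_range_natCast_iff, hinj, hsurj, IsEulerCycle, Function.Bijective,
    and_assoc, and_assoc]

theorem card_isEulerCycle_src_zero_eq [Fintype E] (hN : Fintype.card E = N) (w : V) :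
    Nat.card {e : ZMod N → E // IsEulerCycle src tgt e ∧ src (e 0) = w} =
      Nat.card {l // IsEulerTour src tgt w l} := by
  classical
  refine Nat.card_congr (Equiv.ofBijective
    (fun e => ⟨_, (isEulerTour_map_range_natCast_iff e.1 w).2 e.2⟩) ⟨fun e e' h => ?_, ?_⟩)
  · have h : ∀ k < N, e.1 (k : ℕ) = e'.1 (k : ℕ) := by
      simpa using h
    exact Subtype.ext (funext (forall_zmod_iff_forall_lt.2 h))
  · rintro ⟨l, hl⟩
    have hlen : l.length = N := by
      rw [← hN, ← List.toFinset_card_of_nodup hl.1, Finset.eq_univ_of_forall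
        fun e => List.mem_toFinset.2 (hl.2.1 e), Finset.card_univ]
    let e (i : ZMod N) : E := l[i.val]'(hlen ▸ i.val_lt)
    have he : (List.range N).map (fun k : ℕ => e k) = l := by
      refine List.ext_getElem (by simp [hlen]) fun k hk hkl => ?_
      simp only [e, List.getElem_map, List.getElem_range, ZMod.val_natCast_of_lt (hlen ▸ hkl)]
    exact ⟨⟨e, (isEulerTour_map_range_natCast_iff e w).1 (he ▸ hl)⟩, Subtype.ext he⟩

theorem card_isEulerCycle [Fintype V] [Fintype E] (hN : Fintype.card E = N) :
    Nat.card {e : ZMod N → E // IsEulerCycle src tgt e} =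
      ∑ w, Nat.card {l // IsEulerTour src tgt w l} := by
  rw [← Nat.card_congr (Equiv.sigmaFiberEquiv
    fun e : {e : ZMod N → E // IsEulerCycle src tgt e} => src (e.1 0)), Nat.card_sigma]
  refine Finset.sum_congr rfl fun w _ => ?_
  rw [← card_isEulerCycle_src_zero_eq hN]
  exact Nat.card_congr
    (Equiv.subtypeSubtypeEquivSubtypeInter _ fun e : ZMod N → E => src (e 0) = w)

end EulerCycle

section UniversalCycle

open Fin.Embedding (init tail)

variable {n k N : ℕ}

theorem IsEulerCycle.apply_eq_apply_add_zero {e : ZMod N → (Fin (k + 1) ↪ Fin n)}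
    (he : IsEulerCycle init tail e) (i : ZMod N) (j : Fin (k + 1)) :
    e i j = e (i + (j : ℕ)) 0 := by
  induction j using Fin.induction generalizing i with
  | zero => simp
  | succ j ih =>
    have hstep : e i j.succ = e (i + 1) j.castSucc := DFunLike.congr_fun (he.2 i) j
    rw [hstep, ih, Fin.val_castSucc, Fin.val_succ, Nat.cast_succ, add_assoc, add_comm 1]

theorem IsUniversalCycle.comp_add_right {c : ZMod N → Fin n} (hc : IsUniversalCycle n k N c)
    (t : ZMod N) : IsUniversalCycle n k N fun i => c (i + t) := by
  intro w hw
  simp only [add_right_comm _ _ t]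
  exact (Equiv.addRight t).bijective.existsUnique_iff.1 (hc w hw)

/-- `ZMod N` acts on universal cycles by rotation; `RotEquiv` is the orbit relation. -/
instance : AddAction (ZMod N) {c // IsUniversalCycle n k N c} where
  vadd t c := ⟨fun i => c.1 (i + t), c.2.comp_add_right t⟩
  zero_vadd c := Subtype.ext (funext fun i => congrArg c.1 (add_zero i))
  add_vadd s t c := Subtype.ext (funext fun i => congrArg c.1 (add_assoc i s t).symm)

variable [NeZero N]

theorem isUniversalCycle_iff_exists_equiv (hN : n.descFactorial k = N) {c : ZMod N → Fin n} :
    IsUniversalCycle n k N c ↔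
      ∃ e : ZMod N ≃ (Fin k ↪ Fin n), ∀ i j, e i j = c (i + (j : ℕ)) := by
  constructor
  · intro hc
    choose p hp _ using fun w : Fin k ↪ Fin n => hc w w.injective
    have hinj : Function.Injective p := fun w w' h =>
      DFunLike.ext _ _ fun j => by rw [← hp w j, h, hp w' j]
    have hbij : Function.Bijective p :=
      (Fintype.bijective_iff_injective_and_card p).2 ⟨hinj, by
        rw [ZMod.card, Fintype.card_embedding_eq, Fintype.card_fin, Fintype.card_fin, hN]⟩
    refine ⟨(Equiv.ofBijective p hbij).symm, fun i j => ?_⟩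
    rw [← hp, Equiv.ofBijective_apply_symm_apply p hbij]
  · rintro ⟨e, he⟩ w hw
    simp only [← he]
    have hiff (i : ZMod N) : (∀ j, e i j = w j) ↔ i = e.symm ⟨w, hw⟩ := by
      rw [Equiv.eq_symm_apply, DFunLike.ext_iff]
      rfl
    simp only [hiff, existsUnique_eq]

theorem card_isUniversalCycle (hN : n.descFactorial (k + 1) = N) :
    Nat.card {c // IsUniversalCycle n (k + 1) N c} =
      Nat.card {e : ZMod N → (Fin (k + 1) ↪ Fin n) // IsEulerCycle init tail e} := by
  refine (Nat.card_congr (Equiv.ofBijective (fun e => ⟨fun i => e.1 i 0,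
    (isUniversalCycle_iff_exists_equiv hN).2 ⟨Equiv.ofBijective e.1 e.2.1,
      e.2.apply_eq_apply_add_zero⟩⟩) ⟨fun e e' h => ?_, ?_⟩)).symm
  · refine Subtype.ext (funext fun i => DFunLike.ext _ _ fun j => ?_)
    rw [e.2.apply_eq_apply_add_zero, e'.2.apply_eq_apply_add_zero]
    exact congrFun (congrArg Subtype.val h) _
  · rintro ⟨c, hc⟩
    obtain ⟨e, he⟩ := (isUniversalCycle_iff_exists_equiv hN).1 hc
    refine ⟨⟨e, e.bijective, fun i => DFunLike.ext _ _ fun j => ?_⟩,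
      Subtype.ext (funext fun i => ?_)⟩
    · change e i j.succ = e (i + 1) j.castSucc
      rw [he, he, Fin.val_castSucc, Fin.val_succ, Nat.cast_succ, add_assoc, add_comm 1]
    · simp [he]

theorem IsUniversalCycle.stabilizer_eq_bot (hN : n.descFactorial k = N)
    (c : {c // IsUniversalCycle n k N c}) : AddAction.stabilizer (ZMod N) c = ⊥ := by
  obtain ⟨e, he⟩ := (isUniversalCycle_iff_exists_equiv hN).1 c.2
  refine (AddSubgroup.eq_bot_iff_forall _).2 fun t ht => e.injective (DFunLike.ext _ _ fun j => ?_)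
  rw [he, he, zero_add, add_comm]
  exact congrFun (congrArg Subtype.val ht) _

theorem card_quot_rotEquiv_mul_eq_card_isUniversalCycle (hN : n.descFactorial k = N) :
    Nat.card (Quot (RotEquiv (n := n) (k := k) (N := N))) * N =
      Nat.card {c // IsUniversalCycle n k N c} := by
  have hrot (c c' : {c // IsUniversalCycle n k N c}) :
      RotEquiv c c' ↔ AddAction.orbitRel (ZMod N) _ c c' := by
    refine Iff.trans (exists_congr fun t => ?_)
      (Setoid.comm' (AddAction.orbitRel (ZMod N) _) (x := c') (y := c))
    rw [Subtype.ext_iff, funext_iff]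
    exact forall_congr' fun i => eq_comm
  rw [Nat.card_congr (Quot.congrRight hrot), Nat.card_congr
    (AddAction.selfEquivOrbitsQuotientProd (IsUniversalCycle.stabilizer_eq_bot hN)), Nat.card_prod,
    Nat.card_zmod]
  rfl

omit [NeZero N] in
theorem card_quot_rotEquiv_mul (hk : k < n) (hN : n.descFactorial (k + 1) = N) :
    Nat.card (Quot (RotEquiv (n := n) (k := k + 1) (N := N))) * N =
      (∑ w : Fin k ↪ Fin n, Nat.card {f // IsArborescence init tail w f}) *
        (n - k - 1)! ^ n.descFactorial k := by
  have : NeZero N := ⟨hN ▸ (Nat.descFactorial_pos.2 hk).ne'⟩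
  rw [card_quot_rotEquiv_mul_eq_card_isUniversalCycle hN, card_isUniversalCycle hN,
    card_isEulerCycle, Finset.sum_mul]
  · refine Finset.sum_congr rfl fun w _ => ?_
    rw [card_isEulerTour_init_tail (by simpa using hk), Fintype.card_fin]
  · rw [Fintype.card_embedding_eq, Fintype.card_fin, Fintype.card_fin, hN]

end UniversalCycle

theorem num_ucycles_k3 (n : ℕ) (hn : 4 ≤ n) :
    Nat.card (Quot (RotEquiv (n := n) (k := 3) (N := n * (n - 1) * (n - 2)))) =
      (n - 3) ^ ((n - 1) * (n - 2) / 2) * (n - 2) ^ (n - 1) * (n - 1) ^ ((n - 1) * (n - 2) / 2 - 2) * n ^ (n - 2) * (Nat.factorial (n - 3)) ^ (n * (n - 1)) := by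
  have hpairs : n.descFactorial 2 = n * (n - 1) := by
    simp [Nat.descFactorial_succ, mul_comm]
  have htriples : n.descFactorial 3 = n * (n - 1) * (n - 2) := by
    rw [Nat.descFactorial_succ, hpairs, mul_comm]
  have hpos : 0 < n * (n - 1) * (n - 2) :=
    htriples ▸ Nat.descFactorial_pos.2 (by lia)
  refine Nat.eq_of_mul_eq_mul_right hpos ?_
  rw [card_quot_rotEquiv_mul (by lia) htriples]
  have harb (w : Fin 2 ↪ Fin n) := card_isArborescence_init_tail (by simpa using hn) w
  simp only [Fintype.card_fin] at harb
  simp only [harb, Finset.sum_const, Finset.card_univ, Fintype.card_embedding_eq, Fintype.card_fin,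
    hpairs, smul_eq_mul, Nat.sub_sub, Nat.reduceAdd]
  ac_rfl
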